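/- arXiv:2409.20444 — 3 statements merged into one kernel-verified Lean document; each statement's English description precedes it below -/
import Mathlib

section
/- Derivation of the KdV equation at order ε²: let m_e > 0, τ_i ≥ 0 and c > 0 satisfy c²(1 + m_e) = 1 + τ_i, and set κ = (c²m_e − 1)²/(2c(1 + m_e)). Let n¹, n₊², n₋², v₊², v₋², φ² : ℝ × ℝ → ℝ be smooth functions and define v¹ = c·n¹ and φ¹ = (c² − τ_i)·n¹. Suppose that on ℝ × ℝ: (a) ∂_T n¹ + ∂_Y v₊² + ∂_Y(n¹v¹) − c∂_Y n₊² = 0; (b) ∂_T n¹ + ∂_Y v₋² + ∂_Y(n¹v¹) − c∂_Y n₋² = 0; (c) τ_i ∂_Y(n₊² − (1/2)(n¹)²) + ∂_T v¹ + v¹∂_Y v¹ − c∂_Y v₊² + ∂_Y φ² = 0; (d) ∂_Y(n₋² − (1/2)(n¹)²) + m_e(∂_T v¹ + v¹∂_Y v¹ − c∂_Y v₋²) − ∂_Y φ² = 0; (e) ∂_Y²φ¹ + n₊² − n₋² = 0. Then n¹ satisfies the Korteweg–de Vries equation ∂_T n¹ + c·n¹∂_Y n¹ + κ·∂_Y³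 n¹ = 0 on ℝ × ℝ. -/
/-- Partial derivative in the first (spatial) variable `Y` of a curried function. -/
noncomputable def dY (f : ℝ → ℝ → ℝ) : ℝ → ℝ → ℝ :=
  fun Y T => deriv (fun y => f y T) Y

/-- Partial derivative in the second (time) variable `T` of a curried function. -/
noncomputable def dT (f : ℝ → ℝ → ℝ) : ℝ → ℝ → ℝ :=
  fun Y T => deriv (fun s => f Y s) T

/-!
The combination `c (a) + c mₑ (b) + (c) + (d) + (c² - τ) ∂_Y (e)` eliminates the second-order
unknowns. The velocities and the potential cancel outright, and so does `n₊²`; the coefficient of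
`∂_Y n₋²` is `1 + τ - c² (1 + mₑ)`, which vanishes exactly because `c` is the sound speed. The same
relation turns `c² - τ` into `1 - c² mₑ`, so what remains is `2 c (1 + mₑ)` times the KdV equation.
-/

section Slices

variable {𝕜 E F G : Type*} [NontriviallyNormedField 𝕜] [NormedAddCommGroup E] [NormedSpace 𝕜 E]
  [NormedAddCommGroup F] [NormedSpace 𝕜 F] [NormedAddCommGroup G] [NormedSpace 𝕜 G]
  {f : E → F → G} {n : WithTop ℕ∞}

lemma differentiable_slice_left (hf : ContDiff 𝕜 n fun p : E × F => f p.1 p.2) (hn : n ≠ 0)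
    (y : F) : Differentiable 𝕜 fun x => f x y :=
  (hf.comp (contDiff_prodMk_left y)).differentiable hn

lemma differentiable_slice_right (hf : ContDiff 𝕜 n fun p : E × F => f p.1 p.2) (hn : n ≠ 0)
    (x : E) : Differentiable 𝕜 fun y => f x y :=
  (hf.comp (contDiff_prodMk_right x)).differentiable hn

end Slices

section PartialDerivatives

variable {f g : ℝ → ℝ → ℝ} {Y T : ℝ}

lemma dY_const_mul (k : ℝ) (f : ℝ → ℝ → ℝ) :
    dY (fun y s => k * f y s) = fun y s => k * dY f y s := by
  funext y s
  exact deriv_const_mul_field k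

lemma dT_const_mul (k : ℝ) (f : ℝ → ℝ → ℝ) :
    dT (fun y s => k * f y s) = fun y s => k * dT f y s := by
  funext y s
  exact deriv_const_mul_field k

lemma dY_sub (hf : DifferentiableAt ℝ (fun y => f y T) Y)
    (hg : DifferentiableAt ℝ (fun y => g y T) Y) :
    dY (fun y s => f y s - g y s) Y T = dY f Y T - dY g Y T :=
  deriv_fun_sub hf hg

lemma dY_sq (hf : DifferentiableAt ℝ (fun y => f y T) Y) :
    dY (fun y s => f y s ^ 2) Y T = 2 * f Y T * dY f Y T := by
  simpa [dY] using deriv_fun_pow hf 2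

lemma dY_mul_const_mul_self (k : ℝ) (hf : DifferentiableAt ℝ (fun y => f y T) Y) :
    dY (fun y s => f y s * (k * f y s)) Y T = 2 * k * f Y T * dY f Y T := by
  have h_eq : (fun y s => f y s * (k * f y s)) = fun y s => k * f y s ^ 2 := by
    funext y s
    ring
  simp only [h_eq, dY_const_mul, dY_sq hf]
  ring

lemma dY_sub_half_sq (hf : DifferentiableAt ℝ (fun y => f y T) Y)
    (hg : DifferentiableAt ℝ (fun y => g y T) Y) :
    dY (fun y s => f y s - (1 / 2) * g y s ^ 2) Y T = dY f Y T - g Y T * dY g Y T := by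
  rw [dY_sub hf ((hg.fun_pow 2).const_mul _)]
  simp only [dY_const_mul, dY_sq hg]
  ring

lemma differentiable_slice_dY {n : WithTop ℕ∞} (hf : ContDiff ℝ n fun p : ℝ × ℝ => f p.1 p.2)
    (hn : 2 ≤ n) (T : ℝ) : Differentiable ℝ fun y => dY f y T :=
  ((hf.of_le hn).comp (contDiff_prodMk_left T)).differentiable_deriv_two

end PartialDerivatives

/-- Solutions of the order-`ε²` system of the long-wavelength expansion of the two-fluid
Euler–Poisson equations, with the first-order relations `v¹ = c n¹` and `φ¹ = (c² - τ) n¹` already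
substituted. The suffixes `p` and `m` stand for ions (`+`) and electrons (`-`). The regularity
fields ask only that the partial derivatives in the equations exist, so that `deriv` never takes
its junk value there. -/
structure IsSecondOrderSolution (me τ c : ℝ) (n1 np2 nm2 vp2 vm2 φ2 : ℝ → ℝ → ℝ) : Prop where
  differentiable_n1 : ∀ T, Differentiable ℝ fun y => n1 y T
  differentiable_dY_n1 : ∀ T, Differentiable ℝ fun y => dY n1 y T
  differentiable_n1_time : ∀ Y, Differentiable ℝ fun s => n1 Y s
  differentiable_np2 : ∀ T, Differentiable ℝ fun y => np2 y T
  differentiable_nm2 : ∀ T, Differentiable ℝ fun y => nm2 y T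
  differentiable_vp2 : ∀ T, Differentiable ℝ fun y => vp2 y T
  differentiable_vm2 : ∀ T, Differentiable ℝ fun y => vm2 y T
  differentiable_φ2 : ∀ T, Differentiable ℝ fun y => φ2 y T
  ion_continuity : ∀ Y T,
    dT n1 Y T + dY vp2 Y T + dY (fun y s => n1 y s * (c * n1 y s)) Y T - c * dY np2 Y T = 0
  electron_continuity : ∀ Y T,
    dT n1 Y T + dY vm2 Y T + dY (fun y s => n1 y s * (c * n1 y s)) Y T - c * dY nm2 Y T = 0
  ion_momentum : ∀ Y T,
    τ * dY (fun y s => np2 y s - (1 / 2) * n1 y s ^ 2) Y T + dT (fun y s => c * n1 y s) Y T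
      + c * n1 Y T * dY (fun y s => c * n1 y s) Y T - c * dY vp2 Y T + dY φ2 Y T = 0
  electron_momentum : ∀ Y T,
    dY (fun y s => nm2 y s - (1 / 2) * n1 y s ^ 2) Y T
      + me * (dT (fun y s => c * n1 y s) Y T
        + c * n1 Y T * dY (fun y s => c * n1 y s) Y T - c * dY vm2 Y T)
      - dY φ2 Y T = 0
  poisson : ∀ Y T, dY (dY fun y s => (c ^ 2 - τ) * n1 y s) Y T + np2 Y T - nm2 Y T = 0

namespace IsSecondOrderSolution

variable {me τ c : ℝ} {n1 np2 nm2 vp2 vm2 φ2 : ℝ → ℝ → ℝ}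

lemma dY_poisson (h : IsSecondOrderSolution me τ c n1 np2 nm2 vp2 vm2 φ2) (Y T : ℝ) :
    (c ^ 2 - τ) * dY (dY (dY n1)) Y T = dY nm2 Y T - dY np2 Y T := by
  have charge_separation :
      (fun y s => (c ^ 2 - τ) * dY (dY n1) y s) = fun y s => nm2 y s - np2 y s := by
    funext y s
    have h_poisson := h.poisson y s
    rw [dY_const_mul, dY_const_mul] at h_poisson
    linarith
  rw [← dY_sub (h.differentiable_nm2 T Y) (h.differentiable_np2 T Y), ← charge_separation,
    dY_const_mul]

lemma scaled_kdv (h : IsSecondOrderSolution me τ c n1 np2 nm2 vp2 vm2 φ2)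
    (hsound : c ^ 2 * (1 + me) = 1 + τ) (Y T : ℝ) :
    2 * c * (1 + me) * (dT n1 Y T + c * n1 Y T * dY n1 Y T)
      + (c ^ 2 * me - 1) ^ 2 * dY (dY (dY n1)) Y T = 0 := by
  have ion_continuity := h.ion_continuity Y T
  have electron_continuity := h.electron_continuity Y T
  have ion_momentum := h.ion_momentum Y T
  have electron_momentum := h.electron_momentum Y T
  have hn1 := h.differentiable_n1 T Y
  rw [dY_mul_const_mul_self c hn1] at ion_continuity electron_continuity
  rw [dY_sub_half_sq (h.differentiable_np2 T Y) hn1, dT_const_mul, dY_const_mul] at ion_momentum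
  rw [dY_sub_half_sq (h.differentiable_nm2 T Y) hn1, dT_const_mul, dY_const_mul]
    at electron_momentum
  obtain rfl : τ = c ^ 2 * (1 + me) - 1 := by linarith
  linear_combination c * ion_continuity + c * me * electron_continuity + ion_momentum
    + electron_momentum + (1 - c ^ 2 * me) * h.dY_poisson Y T

end IsSecondOrderSolution

theorem kdv_from_second_order_system_general {me τ c : ℝ} (hc : c ≠ 0) (hme : 1 + me ≠ 0)
    (hsound : c ^ 2 * (1 + me) = 1 + τ) {n1 np2 nm2 vp2 vm2 φ2 : ℝ → ℝ → ℝ}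
    (h : IsSecondOrderSolution me τ c n1 np2 nm2 vp2 vm2 φ2) (Y T : ℝ) :
    dT n1 Y T + c * n1 Y T * dY n1 Y T
      + (c ^ 2 * me - 1) ^ 2 / (2 * c * (1 + me)) * dY (dY (dY n1)) Y T = 0 := by
  have h_scaled := h.scaled_kdv hsound Y T
  field_simp
  linear_combination h_scaled

theorem kdv_from_second_order_system
    (me τ c : ℝ) (hme : 0 < me) (hτ : 0 ≤ τ) (hc : 0 < c)
    (hsound : c ^ 2 * (1 + me) = 1 + τ)
    (κ : ℝ) (hκ : κ = (c ^ 2 * me - 1) ^ 2 / (2 * c * (1 + me)))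
    (n1 np2 nm2 vp2 vm2 φ2 : ℝ → ℝ → ℝ)
    (hn1 : ContDiff ℝ (⊤ : ℕ∞) (fun p : ℝ × ℝ => n1 p.1 p.2))
    (hnp2 : ContDiff ℝ (⊤ : ℕ∞) (fun p : ℝ × ℝ => np2 p.1 p.2))
    (hnm2 : ContDiff ℝ (⊤ : ℕ∞) (fun p : ℝ × ℝ => nm2 p.1 p.2))
    (hvp2 : ContDiff ℝ (⊤ : ℕ∞) (fun p : ℝ × ℝ => vp2 p.1 p.2))
    (hvm2 : ContDiff ℝ (⊤ : ℕ∞) (fun p : ℝ × ℝ => vm2 p.1 p.2))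
    (hφ2 : ContDiff ℝ (⊤ : ℕ∞) (fun p : ℝ × ℝ => φ2 p.1 p.2))
    (v1 φ1 : ℝ → ℝ → ℝ)
    (hv1 : v1 = fun Y T => c * n1 Y T)
    (hφ1 : φ1 = fun Y T => (c ^ 2 - τ) * n1 Y T)
    (ha : ∀ Y T : ℝ,
      dT n1 Y T + dY vp2 Y T + dY (fun y s => n1 y s * v1 y s) Y T
        - c * dY np2 Y T = 0)
    (hb : ∀ Y T : ℝ,
      dT n1 Y T + dY vm2 Y T + dY (fun y s => n1 y s * v1 y s) Y T
        - c * dY nm2 Y T = 0)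
    (hcc : ∀ Y T : ℝ,
      τ * dY (fun y s => np2 y s - (1 / 2) * (n1 y s) ^ 2) Y T
        + dT v1 Y T + v1 Y T * dY v1 Y T - c * dY vp2 Y T + dY φ2 Y T = 0)
    (hd : ∀ Y T : ℝ,
      dY (fun y s => nm2 y s - (1 / 2) * (n1 y s) ^ 2) Y T
        + me * (dT v1 Y T + v1 Y T * dY v1 Y T - c * dY vm2 Y T)
        - dY φ2 Y T = 0)
    (he : ∀ Y T : ℝ, dY (dY φ1) Y T + np2 Y T - nm2 Y T = 0) :
    ∀ Y T : ℝ,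
      dT n1 Y T + c * n1 Y T * dY n1 Y T + κ * dY (dY (dY n1)) Y T = 0 := by
  subst hv1 hφ1 hκ
  have smooth_ne_zero : ((⊤ : ℕ∞) : WithTop ℕ∞) ≠ 0 := by simp
  have hY {f : ℝ → ℝ → ℝ} (hf : ContDiff ℝ (⊤ : ℕ∞) fun p : ℝ × ℝ => f p.1 p.2) :=
    differentiable_slice_left hf smooth_ne_zero
  exact kdv_from_second_order_system_general hc.ne' (by positivity) hsound
    ⟨hY hn1, differentiable_slice_dY hn1 (by norm_cast),
      differentiable_slice_right hn1 smooth_ne_zero, hY hnp2, hY hnm2, hY hvp2, hY hvm2, hY hφ2,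
      ha, hb, hcc, hd, he⟩
end

section
/- Uniqueness for the linearized KdV equation via energy estimates: let c, κ ∈ ℝ and T* > 0. Let a : ℝ × [0, T*] → ℝ be smooth with a and ∂_Y a bounded on ℝ × [0, T*]. Suppose u : ℝ × [0, T*] → ℝ is smooth, satisfies ∂_T u + c·∂_Y(a·u) + κ·∂_Y³ u = 0 on ℝ × [0, T*] with u(·, 0) ≡ 0, and is such that: for every T ∈ [0, T*] the functions u(·,T), ∂_Y u(·,T), ∂_Y² u(·,T), ∂_Y³ u(·,T), ∂_Y⁴ u(·,T) are square-integrable on ℝ; u(Y,T), ∂_Y u(Y,T), ∂_Y² u(Y,T), ∂_Y³ u(Y,T) → 0 as |Y| → ∞ uniformly in T; and the map T ↦ ∫_ℝ (u(Y,T)² + (∂_Y u(Y,T))²) dY is differentiable with derivative ∫_ℝ (2u·∂_T u + 2∂_Y u·∂_Y ∂_T u) dY. Then u ≡ 0 on ℝ × [0, T*]. -/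
open MeasureTheory Set

/-!
The density `u²` obeys the balance law `∂_T(u²) + ∂_Y J = -c (∂_Y a) u²` with flux
`J = c a u² + κ (2 u ∂_Y²u - (∂_Y u)²)`. Integrated over `[-R, R]`, it bounds the growth rate of
`∫_{-R}^{R} u²` by a multiple of `∫_{-R}^{R} u²` plus the boundary values of `J`, and the latter
tend to `0` uniformly in time as `R → ∞`. Grönwall's inequality on `[-R, R]` followed by `R → ∞`
gives `u = 0`. Since the truncated integrals run over compact sets, they can be differentiated under
the integral sign.
-/

open Function Filter Topology

section Gronwall

theorem continuous_gronwallBound (K ε : ℝ) :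
    Continuous fun p : ℝ × ℝ => gronwallBound p.1 K ε p.2 := by
  unfold gronwallBound
  split_ifs <;> fun_prop

theorem le_gronwallBound_of_hasDerivAt_Ioo {K ε a b : ℝ} {f f' : ℝ → ℝ}
    (hf : ContinuousOn f (Icc a b)) (hf' : ∀ x ∈ Ioo a b, HasDerivAt f (f' x) x)
    (bound : ∀ x ∈ Ioo a b, f' x ≤ K * f x + ε) :
    ∀ x ∈ Icc a b, f x ≤ gronwallBound (f a) K ε (x - a) := by
  intro x hx
  obtain rfl | hax := hx.1.eq_or_lt
  · rw [sub_self, gronwallBound_x0]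
  have bound_from : ∀ s ∈ Ioo a x, f x ≤ gronwallBound (f s) K ε (x - s) := by
    intro s hs
    have hsub : Ico s x ⊆ Ioo a b := fun t ht => ⟨hs.1.trans_le ht.1, ht.2.trans_le hx.2⟩
    exact le_gronwallBound_of_liminf_deriv_right_le (hf.mono (Icc_subset_Icc hs.1.le hx.2))
      (fun t ht _ hr => (hf' t (hsub ht)).hasDerivWithinAt.liminf_right_slope_le hr) le_rfl
      (fun t ht => bound t (hsub ht)) x ⟨hs.2.le, le_rfl⟩
  have hfa : Tendsto f (𝓝[>] a) (𝓝 (f a)) :=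
    ((hf a ⟨le_rfl, hx.1.trans hx.2⟩).mono_of_mem_nhdsWithin
      (Icc_mem_nhdsGT (hax.trans_le hx.2))).tendsto
  have hsub : Tendsto (fun s => x - s) (𝓝[>] a) (𝓝 (x - a)) :=
    (continuous_const.sub continuous_id).continuousWithinAt.tendsto
  have hlim := ((continuous_gronwallBound K ε).tendsto (f a, x - a)).comp (hfa.prodMk_nhds hsub)
  exact ge_of_tendsto hlim (eventually_of_mem (Ioo_mem_nhdsGT hax) bound_from)

end Gronwall

theorem contDiff_slice_of_contDiffOn {E F G : Type*} [NormedAddCommGroup E] [NormedSpace ℝ E]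
    [NormedAddCommGroup F] [NormedSpace ℝ F] [NormedAddCommGroup G] [NormedSpace ℝ G]
    {n : WithTop ℕ∞} {f : E → F → G} {s : Set F}
    (hf : ContDiffOn ℝ n (uncurry f) (univ ×ˢ s)) {t : F} (ht : t ∈ s) :
    ContDiff ℝ n fun y => f y t :=
  contDiffOn_univ.1 <| hf.comp (f := fun y => (y, t)) (by fun_prop) fun _ _ => ⟨mem_univ _, ht⟩

section ParametricIntegral

variable {E : Type*} [NormedAddCommGroup E] [NormedSpace ℝ E]

theorem continuousOn_intervalIntegral_of_continuousOn {X : Type*} [TopologicalSpace X]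
    {f : ℝ → X → E} {s : Set X} (hf : ContinuousOn (uncurry f) (univ ×ˢ s)) (l r : ℝ) :
    ContinuousOn (fun t => ∫ y in l..r, f y t) s := by
  rw [continuousOn_iff_continuous_domRestrict]
  refine intervalIntegral.continuous_parametric_intervalIntegral_of_continuous'
    (f := fun (t : s) y => f y t) ?_ l r
  exact hf.comp_continuous (f := fun p : s × ℝ => (p.2, (p.1 : X))) (by fun_prop)
    fun p => ⟨mem_univ _, p.1.2⟩

variable {f : ℝ → ℝ → E} {s : Set ℝ}

theorem hasDerivAt_snd_of_contDiffOn (hs : IsOpen s)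
    (hf : ContDiffOn ℝ 1 (uncurry f) (univ ×ˢ s)) (y : ℝ) {t : ℝ} (ht : t ∈ s) :
    HasDerivAt (f y) (fderiv ℝ (uncurry f) (y, t) (0, 1)) t := by
  have hdiff : DifferentiableAt ℝ (uncurry f) (y, t) :=
    (hf.contDiffAt ((isOpen_univ.prod hs).mem_nhds ⟨mem_univ _, ht⟩)).differentiableAt one_ne_zero
  exact hdiff.hasFDerivAt.comp_hasDerivAt t ((hasDerivAt_const t y).prodMk (hasDerivAt_id t))

theorem continuousOn_deriv_snd_of_contDiffOn (hs : IsOpen s)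
    (hf : ContDiffOn ℝ 1 (uncurry f) (univ ×ˢ s)) :
    ContinuousOn (fun p : ℝ × ℝ => deriv (f p.1) p.2) (univ ×ˢ s) := by
  have hfderiv := hf.continuousOn_fderiv_of_isOpen (isOpen_univ.prod hs) le_rfl
  exact (hfderiv.clm_apply continuousOn_const).congr
    fun p hp => (hasDerivAt_snd_of_contDiffOn hs hf p.1 hp.2).deriv

theorem hasDerivAt_intervalIntegral_of_contDiffOn (hs : IsOpen s)
    (hf : ContDiffOn ℝ 1 (uncurry f) (univ ×ˢ s)) (l r : ℝ) {t : ℝ} (ht : t ∈ s) :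
    HasDerivAt (fun τ => ∫ y in l..r, f y τ) (∫ y in l..r, deriv (f y) t) t := by
  have hderiv := continuousOn_deriv_snd_of_contDiffOn hs hf
  have hslice : ∀ τ ∈ s, Continuous fun y => f y τ :=
    fun τ hτ => (contDiff_slice_of_contDiffOn hf hτ).continuous
  obtain ⟨δ, hδ, hball⟩ := Metric.nhds_basis_closedBall.mem_iff.1 (hs.mem_nhds ht)
  obtain ⟨B, hB⟩ := (isCompact_uIcc.prod (isCompact_closedBall t δ)).exists_bound_of_continuousOn
    (hderiv.mono (prod_mono (subset_univ (uIcc l r)) hball))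
  refine (intervalIntegral.hasDerivAt_integral_of_dominated_loc_of_deriv_le
    (F' := fun τ y => deriv (f y) τ) (bound := fun _ => B) (Metric.closedBall_mem_nhds t hδ)
    ?_ ((hslice t ht).intervalIntegrable l r) ?_ ?_ intervalIntegrable_const ?_).2
  · filter_upwards [hs.mem_nhds ht] with τ hτ
    exact (hslice τ hτ).aestronglyMeasurable
  · have hcont : Continuous fun y => deriv (f y) t :=
      hderiv.comp_continuous (f := fun y => (y, t)) (by fun_prop) fun y => ⟨mem_univ _, ht⟩
    exact hcont.aestronglyMeasurable
  · exact .of_forall fun y hy τ hτ => hB (y, τ) ⟨uIoc_subset_uIcc hy, hτ⟩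
  · exact .of_forall fun y _ τ hτ =>
      (hasDerivAt_snd_of_contDiffOn hs hf y (hball hτ)).differentiableAt.hasDerivAt

end ParametricIntegral

section EnergyFlux

/-- The spatial flux of the density `f²` for the equation `f_T + c (b f)_Y + κ f_YYY = 0`, at a
fixed time: `b` and `f` are the coefficient and the solution as functions of `Y` alone. -/
noncomputable def kdvFlux (c κ : ℝ) (b f : ℝ → ℝ) (y : ℝ) : ℝ :=
  c * (b y * f y ^ 2) + κ * (2 * (f y * deriv (deriv f) y) - deriv f y ^ 2)

variable {c κ K A ε l r y : ℝ} {b f g : ℝ → ℝ}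

theorem hasDerivAt_kdvFlux (hb : DifferentiableAt ℝ b y) (hf : ContDiff ℝ 3 f) :
    HasDerivAt (kdvFlux c κ b f)
      (2 * f y * (c * deriv (fun x => b x * f x) y + κ * deriv (deriv (deriv f)) y)
        - c * deriv b y * f y ^ 2) y := by
  have hf₁ : ContDiff ℝ 2 (deriv f) := hf.deriv'
  have hf₂ : ContDiff ℝ 1 (deriv (deriv f)) := hf₁.deriv'
  have hf' := (hf.differentiable (by norm_num) y).hasDerivAt
  have hf₁' := (hf₁.differentiable (by norm_num) y).hasDerivAt
  have hf₂' := (hf₂.differentiable one_ne_zero y).hasDerivAt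
  have hflux := ((hb.hasDerivAt.mul (hf'.pow 2)).const_mul c).add
    ((((hf'.mul hf₂').const_mul 2).sub (hf₁'.pow 2)).const_mul κ)
  have hbf : deriv (fun x => b x * f x) y = deriv b y * f y + b y * deriv f y :=
    (hb.hasDerivAt.mul hf').deriv
  refine hflux.congr_deriv ?_
  rw [hbf]
  simp only [Pi.pow_apply]
  ring

theorem integral_two_mul_mul_le_kdvFlux (hlr : l ≤ r) (hb : ContDiff ℝ 1 b) (hf : ContDiff ℝ 3 f)
    (hg : ∀ y, g y + c * deriv (fun x => b x * f x) y + κ * deriv (deriv (deriv f)) y = 0)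
    (hK : ∀ y, -K ≤ c * deriv b y) :
    ∫ y in l..r, 2 * f y * g y ≤
      K * (∫ y in l..r, f y ^ 2) + (kdvFlux c κ b f l - kdvFlux c κ b f r) := by
  have hg_eq : ∀ y, g y =
      -(c * deriv (fun x => b x * f x) y + κ * deriv (deriv (deriv f)) y) :=
    fun y => by linarith [hg y]
  have hg_cont : Continuous g := by
    have hbf_cont : Continuous (deriv fun x => b x * f x) :=
      (hb.mul (hf.of_le (by norm_num))).continuous_deriv_one
    rw [funext hg_eq]
    fun_prop
  have hflux : ∫ y in l..r, (-(2 * f y * g y) - c * deriv b y * f y ^ 2) =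
      kdvFlux c κ b f r - kdvFlux c κ b f l := by
    refine intervalIntegral.integral_eq_sub_of_hasDerivAt (fun y _ => ?_)
      (Continuous.intervalIntegrable (by fun_prop) l r)
    refine (hasDerivAt_kdvFlux (hb.differentiable one_ne_zero y) hf).congr_deriv ?_
    rw [hg_eq]
    ring
  have hsource : -∫ y in l..r, c * deriv b y * f y ^ 2 ≤ K * ∫ y in l..r, f y ^ 2 := by
    rw [← intervalIntegral.integral_neg, ← intervalIntegral.integral_const_mul]
    refine intervalIntegral.integral_mono_on hlr (Continuous.intervalIntegrable (by fun_prop) l r)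
      (Continuous.intervalIntegrable (by fun_prop) l r) fun y _ => ?_
    nlinarith [hK y, sq_nonneg (f y)]
  rw [intervalIntegral.integral_sub (Continuous.intervalIntegrable (by fun_prop) l r)
    (Continuous.intervalIntegrable (by fun_prop) l r), intervalIntegral.integral_neg] at hflux
  linarith

theorem abs_kdvFlux_le (hb : |b y| ≤ A) (hf : |f y| ≤ ε) (hf' : |deriv f y| ≤ ε)
    (hf'' : |deriv (deriv f) y| ≤ ε) :
    |kdvFlux c κ b f y| ≤ (|c| * A + 3 * |κ|) * ε ^ 2 := by
  have hA : 0 ≤ A := (abs_nonneg _).trans hb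
  have hε : 0 ≤ ε := (abs_nonneg _).trans hf
  calc |kdvFlux c κ b f y|
      ≤ |c| * (|b y| * |f y| ^ 2)
          + |κ| * (2 * (|f y| * |deriv (deriv f) y|) + |deriv f y| ^ 2) := by
        refine (abs_add_le _ _).trans (add_le_add (by simp [abs_mul]) ?_)
        rw [abs_mul]
        gcongr
        exact (abs_sub _ _).trans (by simp [abs_mul])
    _ ≤ |c| * (A * ε ^ 2) + |κ| * (2 * (ε * ε) + ε ^ 2) := by gcongr
    _ = (|c| * A + 3 * |κ|) * ε ^ 2 := by ring

end EnergyFlux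

section LocalEnergy

/-- The squared `L²` norm of `u(·, T)` on the interval `[-R, R]`, the truncated energy to which
Grönwall's inequality is applied. -/
noncomputable def localEnergy (u : ℝ → ℝ → ℝ) (R T : ℝ) : ℝ :=
  ∫ Y in (-R)..R, u Y T ^ 2

variable {c κ K δ R R' T Tstar : ℝ} {a u : ℝ → ℝ → ℝ} {s : Set ℝ}

theorem localEnergy_mono (hu : Continuous fun Y => u Y T) (hR : 0 ≤ R) (hRR' : R ≤ R') :
    localEnergy u R T ≤ localEnergy u R' T :=
  intervalIntegral.integral_mono_interval (by linarith) (by linarith) hRR'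
    (.of_forall fun _ => sq_nonneg _) ((hu.pow 2).intervalIntegrable _ _)

theorem localEnergy_pos (hu : Continuous fun Y => u Y T) (hR : 0 < R) {Y : ℝ} (hY : |Y| ≤ R)
    (huY : u Y T ≠ 0) : 0 < localEnergy u R T :=
  intervalIntegral.integral_pos (by linarith) (hu.pow 2).continuousOn (fun _ _ => sq_nonneg _)
    ⟨Y, abs_le.1 hY, by positivity⟩

theorem continuousOn_localEnergy (hu : ContinuousOn (uncurry u) (univ ×ˢ s)) (R : ℝ) :
    ContinuousOn (localEnergy u R) s :=
  continuousOn_intervalIntegral_of_continuousOn (f := fun Y T => u Y T ^ 2) (hu.fun_pow 2) (-R) R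

theorem hasDerivAt_localEnergy (hs : IsOpen s) (hu : ContDiffOn ℝ 1 (uncurry u) (univ ×ˢ s))
    (R : ℝ) (hT : T ∈ s) :
    HasDerivAt (localEnergy u R) (∫ Y in (-R)..R, 2 * u Y T * dT u Y T) T := by
  have hderiv : ∀ Y, deriv (fun t => u Y t ^ 2) T = 2 * u Y T * dT u Y T := fun Y => by
    have hdiff := (hasDerivAt_snd_of_contDiffOn hs hu Y hT).differentiableAt
    simpa [dT] using (hdiff.hasDerivAt.fun_pow 2).deriv
  exact (hasDerivAt_intervalIntegral_of_contDiffOn (f := fun Y t => u Y t ^ 2) hs (hu.pow 2)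
    (-R) R hT).congr_deriv (by simp only [hderiv])

theorem localEnergy_le_gronwallBound
    (ha : ∀ T ∈ Ioo 0 Tstar, ContDiff ℝ 1 fun Y => a Y T)
    (ha' : ∀ Y, ∀ T ∈ Ioo 0 Tstar, -K ≤ c * dY a Y T)
    (hu_cont : ContinuousOn (uncurry u) (univ ×ˢ Icc 0 Tstar))
    (hu_diff : ContDiffOn ℝ 1 (uncurry u) (univ ×ˢ Ioo 0 Tstar))
    (hu_slice : ∀ T ∈ Ioo 0 Tstar, ContDiff ℝ 3 fun Y => u Y T)
    (hpde : ∀ Y, ∀ T ∈ Ioo 0 Tstar,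
      dT u Y T + c * dY (fun y s => a y s * u y s) Y T + κ * dY (dY (dY u)) Y T = 0)
    (hR : 0 ≤ R)
    (hflux : ∀ T ∈ Ioo 0 Tstar,
      kdvFlux c κ (a · T) (u · T) (-R) - kdvFlux c κ (a · T) (u · T) R ≤ δ) :
    ∀ T ∈ Icc 0 Tstar, localEnergy u R T ≤ gronwallBound (localEnergy u R 0) K δ T := by
  intro T hT
  have hgrowth : ∀ t ∈ Ioo 0 Tstar,
      ∫ Y in (-R)..R, 2 * u Y t * dT u Y t ≤ K * localEnergy u R t + δ := fun t ht =>
    (integral_two_mul_mul_le_kdvFlux (by linarith) (ha t ht) (hu_slice t ht)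
      (fun Y => hpde Y t ht) fun Y => ha' Y t ht).trans (add_le_add_right (hflux t ht) _)
  simpa only [sub_zero] using le_gronwallBound_of_hasDerivAt_Ioo
    (continuousOn_localEnergy hu_cont R)
    (fun t ht => hasDerivAt_localEnergy isOpen_Ioo hu_diff R ht) hgrowth T hT

end LocalEnergy

theorem linearized_kdv_uniqueness_general {c κ A K Tstar : ℝ} {a u : ℝ → ℝ → ℝ}
    (ha : ∀ T ∈ Ioo 0 Tstar, ContDiff ℝ 1 fun Y => a Y T)
    (ha_bdd : ∀ Y, ∀ T ∈ Ioo 0 Tstar, |a Y T| ≤ A)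
    (ha' : ∀ Y, ∀ T ∈ Ioo 0 Tstar, -K ≤ c * dY a Y T)
    (hu_cont : ContinuousOn (uncurry u) (univ ×ˢ Icc 0 Tstar))
    (hu_diff : ContDiffOn ℝ 1 (uncurry u) (univ ×ˢ Ioo 0 Tstar))
    (hu_slice : ∀ T ∈ Ioo 0 Tstar, ContDiff ℝ 3 fun Y => u Y T)
    (hpde : ∀ Y, ∀ T ∈ Ioo 0 Tstar,
      dT u Y T + c * dY (fun y s => a y s * u y s) Y T + κ * dY (dY (dY u)) Y T = 0)
    (hinit : ∀ Y, u Y 0 = 0)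
    (hdecay : ∀ ε > 0, ∃ R, ∀ Y, R ≤ |Y| → ∀ T ∈ Ioo 0 Tstar,
      |u Y T| ≤ ε ∧ |dY u Y T| ≤ ε ∧ |dY (dY u) Y T| ≤ ε) :
    ∀ Y, ∀ T ∈ Icc 0 Tstar, u Y T = 0 := by
  intro Y T hT
  by_contra hne
  have hslice : Continuous fun Y => u Y T :=
    hu_cont.comp_continuous (f := fun Y => (Y, T)) (by fun_prop) fun _ => ⟨mem_univ _, hT⟩
  have hinit_energy : ∀ R, localEnergy u R 0 = 0 := by simp [localEnergy, hinit]
  let fluxBound (ε : ℝ) : ℝ := (|c| * A + 3 * |κ|) * ε ^ 2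
  have hbound : ∀ ε > 0, localEnergy u (|Y| + 1) T ≤ gronwallBound 0 K (2 * fluxBound ε) T := by
    intro ε hε
    obtain ⟨R₁, hR₁⟩ := hdecay ε hε
    let R := max (|Y| + 1) R₁
    have hflux : ∀ t ∈ Ioo 0 Tstar, ∀ y, |y| = R →
        |kdvFlux c κ (a · t) (u · t) y| ≤ fluxBound ε := by
      intro t ht y hy
      obtain ⟨hu₀, hu₁, hu₂⟩ := hR₁ y (hy ▸ le_max_right _ _) t ht
      exact abs_kdvFlux_le (ha_bdd y t ht) hu₀ hu₁ hu₂
    have hR : 0 ≤ R := le_max_of_le_left (by positivity)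
    rw [← hinit_energy R]
    refine (localEnergy_mono hslice (by positivity) (le_max_left _ _)).trans
      (localEnergy_le_gronwallBound ha ha' hu_cont hu_diff hu_slice hpde hR (fun t ht => ?_) T hT)
    linarith [neg_le_of_abs_le (hflux t ht R (abs_of_nonneg hR)),
      le_of_abs_le (hflux t ht (-R) (by rw [abs_neg, abs_of_nonneg hR]))]
  have hlim : Tendsto (fun ε => gronwallBound 0 K (2 * fluxBound ε) T) (𝓝[>] 0) (𝓝 0) := by
    have hcont : Continuous fun ε => gronwallBound 0 K (2 * fluxBound ε) T :=
      (gronwallBound_continuous_ε 0 K T).comp (by fun_prop)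
    simpa [fluxBound, gronwallBound_ε0_δ0] using
      hcont.continuousWithinAt.tendsto (x := (0 : ℝ)) (s := Ioi 0)
  have hnonpos := ge_of_tendsto hlim (eventually_of_mem self_mem_nhdsWithin hbound)
  exact hnonpos.not_gt (localEnergy_pos hslice (by positivity) (by linarith) hne)

theorem linearized_kdv_uniqueness
    (c κ Tstar : ℝ) (hT : 0 < Tstar)
    (a u : ℝ → ℝ → ℝ)
    (ha_smooth : ContDiffOn ℝ (⊤ : ℕ∞) (fun p : ℝ × ℝ => a p.1 p.2)
      (univ ×ˢ Icc 0 Tstar))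
    (ha_bdd : ∃ C : ℝ, ∀ Y : ℝ, ∀ T ∈ Icc (0:ℝ) Tstar,
      |a Y T| ≤ C ∧ |dY a Y T| ≤ C)
    (hu_smooth : ContDiffOn ℝ (⊤ : ℕ∞) (fun p : ℝ × ℝ => u p.1 p.2)
      (univ ×ˢ Icc 0 Tstar))
    (hpde : ∀ Y : ℝ, ∀ T ∈ Icc (0:ℝ) Tstar,
      dT u Y T + c * dY (fun y s => a y s * u y s) Y T
        + κ * dY (dY (dY u)) Y T = 0)
    (hinit : ∀ Y : ℝ, u Y 0 = 0)
    (hL2 : ∀ T ∈ Icc (0:ℝ) Tstar,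
      Integrable (fun Y => (u Y T) ^ 2) ∧
      Integrable (fun Y => (dY u Y T) ^ 2) ∧
      Integrable (fun Y => (dY (dY u) Y T) ^ 2) ∧
      Integrable (fun Y => (dY (dY (dY u)) Y T) ^ 2) ∧
      Integrable (fun Y => (dY (dY (dY (dY u))) Y T) ^ 2))
    (hdecay : ∀ ε > (0:ℝ), ∃ R : ℝ, ∀ Y : ℝ, R ≤ |Y| →
      ∀ T ∈ Icc (0:ℝ) Tstar,
        |u Y T| < ε ∧ |dY u Y T| < ε ∧ |dY (dY u) Y T| < ε ∧
          |dY (dY (dY u)) Y T| < ε)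
    (henergy : ∀ T ∈ Icc (0:ℝ) Tstar,
      HasDerivAt (fun s => ∫ Y : ℝ, ((u Y s) ^ 2 + (dY u Y s) ^ 2))
        (∫ Y : ℝ, (2 * u Y T * dT u Y T + 2 * dY u Y T * dY (dT u) Y T)) T) :
    ∀ Y : ℝ, ∀ T ∈ Icc (0:ℝ) Tstar, u Y T = 0 := by
  obtain ⟨C, hC⟩ := ha_bdd
  have hsub : Ioo 0 Tstar ⊆ Icc 0 Tstar := Ioo_subset_Icc_self
  have hsource : ∀ Y, ∀ T ∈ Ioo 0 Tstar, -(|c| * C) ≤ c * dY a Y T := fun Y T hT =>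
    neg_le_of_abs_le (by rw [abs_mul]; gcongr; exact (hC Y T (hsub hT)).2)
  refine linearized_kdv_uniqueness_general
    (fun T hT => (contDiff_slice_of_contDiffOn ha_smooth (hsub hT)).of_le (by simp))
    (fun Y T hT => (hC Y T (hsub hT)).1) hsource hu_smooth.continuousOn
    ((hu_smooth.of_le (by simp)).mono (prod_mono_right hsub))
    (fun T hT => (contDiff_slice_of_contDiffOn hu_smooth (hsub hT)).of_le (by norm_cast))
    (fun Y T hT => hpde Y T (hsub hT)) hinit
    fun ε hε => (hdecay ε hε).imp fun R hR Y hY T hT => ?_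
  obtain ⟨hu₀, hu₁, hu₂, -⟩ := hR Y hY T (hsub hT)
  exact ⟨hu₀.le, hu₁.le, hu₂.le⟩
end

section
/- Density residual identity (Lemma on Res_{n_±}): let m ≥ 1 be an integer, c ∈ ℝ, ε > 0, and let n^{(k)}, v^{(k)} : ℝ × ℝ → ℝ (1 ≤ k ≤ m) be smooth functions satisfying v^{(1)} = c·n^{(1)} and, for all 1 ≤ k ≤ m − 1, the hierarchy equations ∂_T n^{(k)} + ∂_Y v^{(k+1)} + ∂_Y( Σ_{j=1}^{k} n^{(j)} v^{(k+1−j)} ) − c·∂_Y n^{(k+1)} = 0 on ℝ × ℝ. Define N(x,t) = 1 + Σ_{k=1}^{m} ε^k n^{(k)}(ε^{1/2}(x − ct), ε^{3/2}t) and V(x,t) = Σ_{k=1}^{m} ε^k v^{(k)}(ε^{1/2}(x − ct), ε^{3/2}t). Then for all (x,t) ∈ ℝ × ℝ: −ε^{1−m}[ ∂_t N + ∂_x(N·V) ](x,t) = −ε^{5/2}·[ ∂_T n^{(m)} + Σ_{j=1}^{m} Σ_{k=j}^{m} ε^{j−1} ∂_Y( n^{(k)} v^{(m+j−k)} ) ]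 evaluated at (Y,T) = (ε^{1/2}(x − ct), ε^{3/2}t). -/
open Finset

/-!
In the stretched variables the continuity operator is `ε^{1/2}` times
`ε ∂_T n - c ∂_Y n + ∂_Y v + ∂_Y (n v)`. Inserting the `m`-term expansions, the coefficient of `ε`
is `∂_Y (v⁽¹⁾ - c n⁽¹⁾) = 0`, and the coefficient of `ε^{k+1}` for `1 ≤ k < m` is the `k`-th
equation of the hierarchy. Only `ε^{m+1} ∂_T n⁽ᵐ⁾` and the products `n⁽ⁱ⁾ v⁽ʲ⁾` with `i + j > m`
survive.
-/

/-- `f` read in the Gardner–Morikawa variables `Y = ε^{1/2} (x - c t)`, `T = ε^{3/2} t`: turns a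
profile of `(Y, T)` into a function of physical space and time `(x, t)`. -/
noncomputable def gardnerMorikawa (c ε : ℝ) (f : ℝ → ℝ → ℝ) : ℝ → ℝ → ℝ :=
  fun x t => f (Real.sqrt ε * (x - c * t)) (ε ^ ((3 : ℝ) / 2) * t)

/-- The `m`-term expansion `∑ ε^k f⁽ᵏ⁾` of a profile in powers of `ε`, starting at order one. -/
noncomputable def truncatedExpansion (ε : ℝ) (m : ℕ) (f : ℕ → ℝ → ℝ → ℝ) : ℝ → ℝ → ℝ :=
  fun Y T => ∑ k ∈ Icc 1 m, ε ^ k * f k Y T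

/-- The continuity operator `∂_t (1 + f) + ∂_x ((1 + f) g)` in the variables `(Y, T)`, with the
common factor `ε^{1/2}` of `∂_t = ε^{1/2} (ε ∂_T - c ∂_Y)` and `∂_x = ε^{1/2} ∂_Y` removed. -/
noncomputable def stretchedContinuity (c ε : ℝ) (f g : ℝ → ℝ → ℝ) : ℝ → ℝ → ℝ :=
  fun Y T => ε * dT f Y T - c * dY f Y T + dY g Y T + dY (fun y s => f y s * g y s) Y T

section Sums

variable {M : Type*} [AddCommMonoid M]

theorem sum_Icc_sum_Icc_eq_add_sum_antidiagonals (m : ℕ) (F : ℕ → ℕ → M) :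
    ∑ i ∈ Icc 1 m, ∑ j ∈ Icc 1 m, F i j =
      ∑ k ∈ Ico 1 m, ∑ j ∈ Icc 1 k, F j (k + 1 - j) +
        ∑ j ∈ Icc 1 m, ∑ k ∈ Icc j m, F k (m + j - k) := by
  have below : ∑ k ∈ Ico 1 m, ∑ j ∈ Icc 1 k, F j (k + 1 - j) =
      ∑ i ∈ Icc 1 m, ∑ j ∈ Ico 1 (m + 1 - i), F i j := by
    rw [sum_comm' (t' := Icc 1 m) (s' := fun i => Ico i m) (by simp only [mem_Ico, mem_Icc]; omega)]
    refine sum_congr rfl fun i hi => ?_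
    rw [mem_Icc] at hi
    refine sum_nbij' (fun k => k + 1 - i) (fun j => j + i - 1) ?_ ?_ ?_ ?_ fun _ _ => rfl <;>
      simp only [mem_Ico] <;> omega
  have above : ∑ j ∈ Icc 1 m, ∑ k ∈ Icc j m, F k (m + j - k) =
      ∑ i ∈ Icc 1 m, ∑ j ∈ Ico (m + 1 - i) (m + 1), F i j := by
    rw [sum_comm' (t' := Icc 1 m) (s' := fun i => Icc 1 i) (by simp only [mem_Icc]; omega)]
    refine sum_congr rfl fun i hi => ?_
    rw [mem_Icc] at hi
    refine sum_nbij' (fun k => m + k - i) (fun j => j + i - m) ?_ ?_ ?_ ?_ fun _ _ => rfl <;>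
      simp only [mem_Ico, mem_Icc] <;> omega
  rw [below, above, ← sum_add_distrib]
  refine sum_congr rfl fun i hi => ?_
  rw [mem_Icc] at hi
  rw [sum_Ico_consecutive _ (by omega) (by omega), Ico_add_one_right_eq_Icc]

variable {R : Type*} [Semiring R]

theorem sum_Icc_sum_Icc_pow_add_mul (m : ℕ) (ε : R) (P : ℕ → ℕ → R) :
    ∑ i ∈ Icc 1 m, ∑ j ∈ Icc 1 m, ε ^ (i + j) * P i j =
      ∑ k ∈ Ico 1 m, ε ^ (k + 1) * ∑ j ∈ Icc 1 k, P j (k + 1 - j) +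
        ε ^ (m + 1) * ∑ j ∈ Icc 1 m, ∑ k ∈ Icc j m, ε ^ (j - 1) * P k (m + j - k) := by
  rw [sum_Icc_sum_Icc_eq_add_sum_antidiagonals]
  simp only [mul_sum, ← mul_assoc, ← pow_add]
  congr 1 <;>
  · refine sum_congr rfl fun a ha => sum_congr rfl fun b hb => ?_
    simp only [mem_Icc, mem_Ico] at ha hb
    congr 2
    omega

theorem sum_pow_mul_add_eq_of_hierarchy {m : ℕ} (hm : 1 ≤ m) (ε : R) (X D : ℕ → R)
    (P : ℕ → ℕ → R) (hX : X 1 = 0)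
    (h : ∀ k ∈ Ico 1 m, D k + X (k + 1) + ∑ j ∈ Icc 1 k, P j (k + 1 - j) = 0) :
    ∑ k ∈ Icc 1 m, ε ^ k * X k + ∑ k ∈ Icc 1 m, ε ^ (k + 1) * D k +
        ∑ i ∈ Icc 1 m, ∑ j ∈ Icc 1 m, ε ^ (i + j) * P i j =
      ε ^ (m + 1) *
        (D m + ∑ j ∈ Icc 1 m, ∑ k ∈ Icc j m, ε ^ (j - 1) * P k (m + j - k)) := by
  have shift_X : ∑ k ∈ Icc 1 m, ε ^ k * X k = ∑ k ∈ Ico 1 m, ε ^ (k + 1) * X (k + 1) := by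
    rw [← Ico_add_one_right_eq_Icc, sum_eq_sum_Ico_succ_bot (by omega), hX, mul_zero, zero_add,
      sum_Ico_add' (fun k => ε ^ k * X k)]
  have split_D : ∑ k ∈ Icc 1 m, ε ^ (k + 1) * D k =
      ∑ k ∈ Ico 1 m, ε ^ (k + 1) * D k + ε ^ (m + 1) * D m := by
    rw [← Ico_add_one_right_eq_Icc, sum_Ico_succ_top hm]
  have low_orders : ∑ k ∈ Ico 1 m, ε ^ (k + 1) * X (k + 1) + ∑ k ∈ Ico 1 m, ε ^ (k + 1) * D k +
      ∑ k ∈ Ico 1 m, ε ^ (k + 1) * ∑ j ∈ Icc 1 k, P j (k + 1 - j) = 0 := by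
    rw [← sum_add_distrib, ← sum_add_distrib]
    refine sum_eq_zero fun k hk => ?_
    rw [← mul_add, ← mul_add, add_comm (X _), h k hk, mul_zero]
  rw [shift_X, split_D, sum_Icc_sum_Icc_pow_add_mul,
    ← add_assoc (Finset.sum _ _) (Finset.sum _ _), add_add_add_comm, low_orders, zero_add, mul_add]

end Sums

section PartialDerivatives

variable {f g : ℝ → ℝ → ℝ} {Y T : ℝ}

theorem dY_mul (hf : DifferentiableAt ℝ (fun y => f y T) Y)
    (hg : DifferentiableAt ℝ (fun y => g y T) Y) :
    dY (fun y s => f y s * g y s) Y T = dY f Y T * g Y T + f Y T * dY g Y T :=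
  deriv_fun_mul hf hg

theorem dY_sum {ι : Type*} {F : ι → ℝ → ℝ → ℝ} {S : Finset ι}
    (hF : ∀ i ∈ S, DifferentiableAt ℝ (fun y => F i y T) Y) :
    dY (fun y s => ∑ i ∈ S, F i y s) Y T = ∑ i ∈ S, dY (F i) Y T :=
  deriv_fun_sum hF

theorem differentiableAt_fst_of_uncurry (hf : DifferentiableAt ℝ (Function.uncurry f) (Y, T)) :
    DifferentiableAt ℝ (fun y => f y T) Y :=
  hf.comp (f := fun y => (y, T)) Y (by fun_prop)

theorem differentiableAt_snd_of_uncurry (hf : DifferentiableAt ℝ (Function.uncurry f) (Y, T)) :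
    DifferentiableAt ℝ (fun s => f Y s) T :=
  hf.comp (f := fun s => (Y, s)) T (by fun_prop)

theorem fderiv_uncurry_apply (hf : DifferentiableAt ℝ (Function.uncurry f) (Y, T)) (a b : ℝ) :
    fderiv ℝ (Function.uncurry f) (Y, T) (a, b) = a * dY f Y T + b * dT f Y T := by
  have along_Y : dY f Y T = fderiv ℝ (Function.uncurry f) (Y, T) (1, 0) :=
    (hf.hasFDerivAt.comp_hasDerivAt (f := fun y => (y, T)) Y
      ((hasDerivAt_id Y).prodMk (hasDerivAt_const Y T))).deriv
  have along_T : dT f Y T = fderiv ℝ (Function.uncurry f) (Y, T) (0, 1) :=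
    (hf.hasFDerivAt.comp_hasDerivAt (f := fun s => (Y, s)) T
      ((hasDerivAt_const T Y).prodMk (hasDerivAt_id T))).deriv
  rw [along_Y, along_T, ← smul_eq_mul, ← smul_eq_mul, ← map_smul, ← map_smul, ← map_add]
  simp

theorem hasDerivAt_comp_dY_dT {a b : ℝ → ℝ} {a' b' t : ℝ}
    (hf : DifferentiableAt ℝ (Function.uncurry f) (a t, b t))
    (ha : HasDerivAt a a' t) (hb : HasDerivAt b b' t) :
    HasDerivAt (fun s => f (a s) (b s)) (a' * dY f (a t) (b t) + b' * dT f (a t) (b t)) t := by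
  rw [← fderiv_uncurry_apply hf]
  exact hf.hasFDerivAt.comp_hasDerivAt (f := fun s => (a s, b s)) t (ha.prodMk hb)

end PartialDerivatives

section ChangeOfVariables

variable {c ε x t : ℝ} {f g : ℝ → ℝ → ℝ}

theorem hasDerivAt_gardnerMorikawa_space
    (hf : DifferentiableAt ℝ (fun y => f y (ε ^ ((3 : ℝ) / 2) * t)) (Real.sqrt ε * (x - c * t))) :
    HasDerivAt (fun y => gardnerMorikawa c ε f y t)
      (Real.sqrt ε * gardnerMorikawa c ε (dY f) x t) x := by
  have hY : HasDerivAt (fun y => Real.sqrt ε * (y - c * t)) (Real.sqrt ε) x := by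
    simpa using ((hasDerivAt_id x).sub_const (c * t)).const_mul (Real.sqrt ε)
  rw [mul_comm]
  exact hf.hasDerivAt.comp x hY

theorem hasDerivAt_gardnerMorikawa_time (hε : 0 ≤ ε)
    (hf : DifferentiableAt ℝ (Function.uncurry f)
      (Real.sqrt ε * (x - c * t), ε ^ ((3 : ℝ) / 2) * t)) :
    HasDerivAt (fun s => gardnerMorikawa c ε f x s)
      (Real.sqrt ε *
        (ε * gardnerMorikawa c ε (dT f) x t - c * gardnerMorikawa c ε (dY f) x t)) t := by
  have hY : HasDerivAt (fun s => Real.sqrt ε * (x - c * s)) (Real.sqrt ε * -c) t := by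
    simpa using (((hasDerivAt_id t).const_mul c).const_sub x).const_mul (Real.sqrt ε)
  have hT : HasDerivAt (fun s => ε ^ ((3 : ℝ) / 2) * s) (ε ^ ((3 : ℝ) / 2)) t := by
    simpa using (hasDerivAt_id t).const_mul (ε ^ ((3 : ℝ) / 2))
  have rpow_three_halves : ε ^ ((3 : ℝ) / 2) = Real.sqrt ε * ε := by
    rw [Real.sqrt_eq_rpow, ← Real.rpow_add_one' hε (by norm_num)]
    norm_num
  refine (hasDerivAt_comp_dY_dT hf hY hT).congr_deriv ?_
  simp only [gardnerMorikawa]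
  linear_combination
    dT f (Real.sqrt ε * (x - c * t)) (ε ^ ((3 : ℝ) / 2) * t) * rpow_three_halves

theorem continuity_gardnerMorikawa (hε : 0 ≤ ε)
    (hf : DifferentiableAt ℝ (Function.uncurry f)
      (Real.sqrt ε * (x - c * t), ε ^ ((3 : ℝ) / 2) * t))
    (hg : DifferentiableAt ℝ (fun y => g y (ε ^ ((3 : ℝ) / 2) * t))
      (Real.sqrt ε * (x - c * t))) :
    deriv (fun s => 1 + gardnerMorikawa c ε f x s) t +
        deriv (fun y => (1 + gardnerMorikawa c ε f y t) * gardnerMorikawa c ε g y t) x =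
      Real.sqrt ε * gardnerMorikawa c ε (stretchedContinuity c ε f g) x t := by
  have hfY := differentiableAt_fst_of_uncurry hf
  have flux : HasDerivAt
      (fun y => (1 + gardnerMorikawa c ε f y t) * gardnerMorikawa c ε g y t) _ x :=
    ((hasDerivAt_gardnerMorikawa_space hfY).const_add 1).mul (hasDerivAt_gardnerMorikawa_space hg)
  rw [((hasDerivAt_gardnerMorikawa_time hε hf).const_add 1).deriv, flux.deriv]
  simp only [gardnerMorikawa, stretchedContinuity, dY_mul hfY hg]
  ring

end ChangeOfVariables

section Expansion

variable {m : ℕ} {c ε Y T : ℝ} {n v : ℕ → ℝ → ℝ → ℝ}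

theorem differentiableAt_uncurry_truncatedExpansion
    (hn : ∀ k ∈ Icc 1 m, DifferentiableAt ℝ (Function.uncurry (n k)) (Y, T)) :
    DifferentiableAt ℝ (Function.uncurry (truncatedExpansion ε m n)) (Y, T) :=
  DifferentiableAt.fun_sum fun k hk => (hn k hk).const_mul (ε ^ k)

theorem differentiableAt_truncatedExpansion
    (hv : ∀ k ∈ Icc 1 m, DifferentiableAt ℝ (fun y => v k y T) Y) :
    DifferentiableAt ℝ (fun y => truncatedExpansion ε m v y T) Y :=
  DifferentiableAt.fun_sum fun k hk => (hv k hk).const_mul (ε ^ k)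

theorem dY_truncatedExpansion (hv : ∀ k ∈ Icc 1 m, DifferentiableAt ℝ (fun y => v k y T) Y) :
    dY (truncatedExpansion ε m v) Y T = ∑ k ∈ Icc 1 m, ε ^ k * dY (v k) Y T :=
  (HasDerivAt.fun_sum fun k hk => (hv k hk).hasDerivAt.const_mul (ε ^ k)).deriv

theorem dT_truncatedExpansion (hn : ∀ k ∈ Icc 1 m, DifferentiableAt ℝ (fun s => n k Y s) T) :
    dT (truncatedExpansion ε m n) Y T = ∑ k ∈ Icc 1 m, ε ^ k * dT (n k) Y T :=
  (HasDerivAt.fun_sum fun k hk => (hn k hk).hasDerivAt.const_mul (ε ^ k)).deriv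

theorem dY_truncatedExpansion_mul
    (hn : ∀ k ∈ Icc 1 m, DifferentiableAt ℝ (fun y => n k y T) Y)
    (hv : ∀ k ∈ Icc 1 m, DifferentiableAt ℝ (fun y => v k y T) Y) :
    dY (fun y s => truncatedExpansion ε m n y s * truncatedExpansion ε m v y s) Y T =
      ∑ i ∈ Icc 1 m, ∑ j ∈ Icc 1 m, ε ^ (i + j) * dY (fun y s => n i y s * v j y s) Y T := by
  have expand : (fun y s => truncatedExpansion ε m n y s * truncatedExpansion ε m v y s) =
      fun y s => ∑ i ∈ Icc 1 m, ∑ j ∈ Icc 1 m, ε ^ (i + j) * (n i y s * v j y s) := by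
    simp only [truncatedExpansion, sum_mul_sum, pow_add, mul_mul_mul_comm _ (n _ _ _)]
  rw [expand]
  exact (HasDerivAt.fun_sum fun i hi => HasDerivAt.fun_sum fun j hj =>
    ((hn i hi).fun_mul (hv j hj)).hasDerivAt.const_mul (ε ^ (i + j))).deriv

theorem stretchedContinuity_truncatedExpansion (hm : 1 ≤ m)
    (hn : ∀ k ∈ Icc 1 m, DifferentiableAt ℝ (Function.uncurry (n k)) (Y, T))
    (hv : ∀ k ∈ Icc 1 m, DifferentiableAt ℝ (fun y => v k y T) Y)
    (hv1 : dY (v 1) Y T = c * dY (n 1) Y T)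
    (hhier : ∀ k ∈ Ico 1 m,
      dT (n k) Y T + dY (v (k + 1)) Y T
        + dY (fun y s => ∑ j ∈ Icc 1 k, n j y s * v (k + 1 - j) y s) Y T
        - c * dY (n (k + 1)) Y T = 0) :
    stretchedContinuity c ε (truncatedExpansion ε m n) (truncatedExpansion ε m v) Y T =
      ε ^ (m + 1) * (dT (n m) Y T + ∑ j ∈ Icc 1 m, ∑ k ∈ Icc j m,
        ε ^ (j - 1) * dY (fun y s => n k y s * v (m + j - k) y s) Y T) := by
  have hnY k hk := differentiableAt_fst_of_uncurry (hn k hk)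
  have hnT k hk := differentiableAt_snd_of_uncurry (hn k hk)
  have hierarchy : ∀ k ∈ Ico 1 m,
      dT (n k) Y T + (dY (v (k + 1)) Y T - c * dY (n (k + 1)) Y T) +
        ∑ j ∈ Icc 1 k, dY (fun y s => n j y s * v (k + 1 - j) y s) Y T = 0 := fun k hk => by
    rw [mem_Ico] at hk
    have products_differentiable : ∀ j ∈ Icc 1 k,
        DifferentiableAt ℝ (fun y => n j y T * v (k + 1 - j) y T) Y := fun j hj => by
      rw [mem_Icc] at hj
      exact (hnY j (mem_Icc.mpr (by omega))).fun_mul (hv (k + 1 - j) (mem_Icc.mpr (by omega)))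
    rw [← dY_sum products_differentiable]
    linear_combination hhier k (mem_Ico.mpr hk)
  rw [← sum_pow_mul_add_eq_of_hierarchy hm ε (fun k => dY (v k) Y T - c * dY (n k) Y T)
    (fun k => dT (n k) Y T) (fun i j => dY (fun y s => n i y s * v j y s) Y T)
    (sub_eq_zero.mpr hv1) hierarchy]
  simp only [stretchedContinuity, dY_truncatedExpansion_mul hnY hv, dY_truncatedExpansion hnY,
    dY_truncatedExpansion hv, dT_truncatedExpansion hnT, mul_sub, sum_sub_distrib, pow_succ',
    mul_assoc, mul_sum, mul_left_comm c]
  ring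

end Expansion

theorem rpow_one_sub_mul_sqrt_mul_pow {ε : ℝ} (hε : 0 < ε) (m : ℕ) :
    ε ^ ((1 : ℝ) - m) * (Real.sqrt ε * ε ^ (m + 1)) = ε ^ ((5 : ℝ) / 2) := by
  rw [Real.sqrt_eq_rpow, ← Real.rpow_natCast, ← Real.rpow_add hε, ← Real.rpow_add hε]
  congr 1
  push_cast
  ring

theorem density_residual_identity_general
    (m : ℕ) (hm : 1 ≤ m) (c : ℝ) (ε : ℝ) (hε : 0 < ε)
    (n v : ℕ → ℝ → ℝ → ℝ)
    (hn : ∀ k, 1 ≤ k → k ≤ m → Differentiable ℝ (Function.uncurry (n k)))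
    (hv : ∀ k, 1 ≤ k → k ≤ m → ∀ T, Differentiable ℝ (fun y => v k y T))
    (hv1 : ∀ Y T : ℝ, v 1 Y T = c * n 1 Y T)
    (hhier : ∀ k, 1 ≤ k → k ≤ m - 1 → ∀ Y T : ℝ,
      dT (n k) Y T + dY (v (k + 1)) Y T
        + dY (fun y s => ∑ j ∈ Icc 1 k, n j y s * v (k + 1 - j) y s) Y T
        - c * dY (n (k + 1)) Y T = 0)
    (N V : ℝ → ℝ → ℝ)
    (hN : N = fun x t => 1 + ∑ k ∈ Icc 1 m,
      ε ^ k * n k (Real.sqrt ε * (x - c * t)) (ε ^ ((3:ℝ)/2) * t))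
    (hV : V = fun x t => ∑ k ∈ Icc 1 m,
      ε ^ k * v k (Real.sqrt ε * (x - c * t)) (ε ^ ((3:ℝ)/2) * t)) :
    ∀ x t : ℝ,
      -ε ^ ((1:ℝ) - m) *
          (deriv (fun s => N x s) t + deriv (fun y => N y t * V y t) x) =
        -ε ^ ((5:ℝ)/2) *
          (dT (n m) (Real.sqrt ε * (x - c * t)) (ε ^ ((3:ℝ)/2) * t)
            + ∑ j ∈ Icc 1 m, ∑ k ∈ Icc j m,
              ε ^ (j - 1) *
                dY (fun y s => n k y s * v (m + j - k) y s)
                  (Real.sqrt ε * (x - c * t)) (ε ^ ((3:ℝ)/2) * t)) := by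
  intro x t
  subst hN hV
  set Y := Real.sqrt ε * (x - c * t)
  set T := ε ^ ((3 : ℝ) / 2) * t
  have hnYT : ∀ k ∈ Icc 1 m, DifferentiableAt ℝ (Function.uncurry (n k)) (Y, T) := fun k hk =>
    hn k (mem_Icc.mp hk).1 (mem_Icc.mp hk).2 (Y, T)
  have hvY : ∀ k ∈ Icc 1 m, DifferentiableAt ℝ (fun y => v k y T) Y := fun k hk =>
    hv k (mem_Icc.mp hk).1 (mem_Icc.mp hk).2 T Y
  have first_order : dY (v 1) Y T = c * dY (n 1) Y T := by
    simp only [dY, hv1, deriv_const_mul_field]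
  have expansion := stretchedContinuity_truncatedExpansion (ε := ε) hm hnYT hvY first_order
    fun k hk => hhier k (mem_Ico.mp hk).1 (Nat.le_sub_one_of_lt (mem_Ico.mp hk).2) Y T
  calc
    _ = -ε ^ ((1 : ℝ) - m) * (Real.sqrt ε *
          stretchedContinuity c ε (truncatedExpansion ε m n) (truncatedExpansion ε m v) Y T) :=
      congrArg _ <| continuity_gardnerMorikawa hε.le
        (differentiableAt_uncurry_truncatedExpansion hnYT) (differentiableAt_truncatedExpansion hvY)
    _ = _ := by
      rw [expansion, ← rpow_one_sub_mul_sqrt_mul_pow hε m]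
      ring

theorem density_residual_identity
    (m : ℕ) (hm : 1 ≤ m) (c : ℝ) (ε : ℝ) (hε : 0 < ε)
    (n v : ℕ → ℝ → ℝ → ℝ)
    (hsmooth : ∀ k, 1 ≤ k → k ≤ m →
      ContDiff ℝ (⊤ : ℕ∞) (fun p : ℝ × ℝ => n k p.1 p.2) ∧
      ContDiff ℝ (⊤ : ℕ∞) (fun p : ℝ × ℝ => v k p.1 p.2))
    (hv1 : ∀ Y T : ℝ, v 1 Y T = c * n 1 Y T)
    (hhier : ∀ k, 1 ≤ k → k ≤ m - 1 → ∀ Y T : ℝ,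
      dT (n k) Y T + dY (v (k + 1)) Y T
        + dY (fun y s => ∑ j ∈ Icc 1 k, n j y s * v (k + 1 - j) y s) Y T
        - c * dY (n (k + 1)) Y T = 0)
    (N V : ℝ → ℝ → ℝ)
    (hN : N = fun x t => 1 + ∑ k ∈ Icc 1 m,
      ε ^ k * n k (Real.sqrt ε * (x - c * t)) (ε ^ ((3:ℝ)/2) * t))
    (hV : V = fun x t => ∑ k ∈ Icc 1 m,
      ε ^ k * v k (Real.sqrt ε * (x - c * t)) (ε ^ ((3:ℝ)/2) * t)) :
    ∀ x t : ℝ,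
      -ε ^ ((1:ℝ) - m) *
          (deriv (fun s => N x s) t + deriv (fun y => N y t * V y t) x) =
        -ε ^ ((5:ℝ)/2) *
          (dT (n m) (Real.sqrt ε * (x - c * t)) (ε ^ ((3:ℝ)/2) * t)
            + ∑ j ∈ Icc 1 m, ∑ k ∈ Icc j m,
              ε ^ (j - 1) *
                dY (fun y s => n k y s * v (m + j - k) y s)
                  (Real.sqrt ε * (x - c * t)) (ε ^ ((3:ℝ)/2) * t)) := by
  exact density_residual_identity_general m hm c ε hε n v
    (fun k h1 hk => (hsmooth k h1 hk).1.differentiable (by simp))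
    (fun k h1 hk _ _ =>
      differentiableAt_fst_of_uncurry ((hsmooth k h1 hk).2.differentiable (by simp) _))
    hv1 hhier N V hN hV
end
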